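/- arXiv:1506.06377 — 2 statements merged into one kernel-verified Lean document; each statement's English description precedes it below -/
import Mathlib

section
/- For any state ω of a finite-dimensional multipartite system A₁...AₙB, the conditional secrecy monotone is nonnegative: Sₙ(A₁:...:Aₙ|B)_ω ≥ 0. -/
open Matrix
open scoped ComplexOrder

noncomputable section

/-- The von Neumann entropy, extended to the cone of positive trace-class operators by
`H(ρ) = Tr η(ρ) − η(Tr ρ)` with `η(x) = −x log x` (computed spectrally). -/
def vnEnt {n : Type*} [Fintype n] [DecidableEq n] (ρ : Matrix n n ℂ) : ℝ :=
  if h : ρ.IsHermitian then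
    (∑ i, Real.negMulLog (h.eigenvalues i)) - Real.negMulLog (∑ i, h.eigenvalues i)
  else 0

/-- A state (density operator): positive semidefinite with unit trace. -/
def IsState {n : Type*} [Fintype n] (ρ : Matrix n n ℂ) : Prop :=
  ρ.PosSemidef ∧ ρ.trace = 1

section Multipartite

variable {N : ℕ} {α : Fin N → Type*} {β : Type*}
  [∀ i, Fintype (α i)] [∀ i, DecidableEq (α i)] [Fintype β] [DecidableEq β]

/-- The marginal of an operator on `A₁ ⊗ ... ⊗ A_N ⊗ B` on the subsystems in `S` together
with `B` (all subsystems outside `S` are traced out). -/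
def margB (S : Finset (Fin N))
    (ω : Matrix ((∀ i, α i) × β) ((∀ i, α i) × β) ℂ) :
    Matrix ((∀ i : {x : Fin N // x ∈ S}, α i.1) × β)
      ((∀ i : {x : Fin N // x ∈ S}, α i.1) × β) ℂ :=
  Matrix.of fun p q =>
    ∑ g : ∀ i : {x : Fin N // x ∉ S}, α i.1,
      ω ((fun i => if h : i ∈ S then p.1 ⟨i, h⟩ else g ⟨i, h⟩), p.2)
        ((fun i => if h : i ∈ S then q.1 ⟨i, h⟩ else g ⟨i, h⟩), q.2)

end Multipartite

/-- The conditional secrecy monotone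
`S_N(A₁:...:A_N|B)_ω = Σ_i H(ω_{A₁...Â_i...A_N B}) − (N−1) H(ω_{A₁...A_N B}) − H(ω_B)`. -/
def secMon {N : ℕ} {α : Fin N → Type*} {β : Type*}
    [∀ i, Fintype (α i)] [∀ i, DecidableEq (α i)] [Fintype β] [DecidableEq β]
    (ω : Matrix ((∀ i, α i) × β) ((∀ i, α i) × β) ℂ) : ℝ :=
  (∑ i : Fin N, vnEnt (margB {i}ᶜ ω)) - ((N : ℝ) - 1) * vnEnt (margB Finset.univ ω)
    - vnEnt (margB ∅ ω)

/-!
The inequality is a chain of strong subadditivities `H(A₁…A_N B) + H(S ∩ T) ≤ H(S) + H(T)` with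
`S ∪ T = {A₁, …, A_N}`, each of which says that restriction to a subsystem does not increase the
relative entropy `D(ρ‖σ)`.

For the latter, write `D(ρ‖σ)` as the integral over `t > 0` of `⟨√ρ, (Δ + t)⁻¹ √ρ⟩ - Tr ρ / (1 + t)`
with `Δ` the relative modular operator. The resolvent term is the maximum over all operators `X` of
`2 Re Tr(X*ρ) - Tr(X*σX) - t Tr(XρX*)`, which depends on `ρ` and `σ` only through the functionals
they induce. Passing to a subsystem leaves this form alone and merely restricts the range of `X`.
-/

section ScalarIntegral

open Real Set Filter Topology MeasureTheory

variable {l m : ℝ}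

theorem hasDerivAt_mul_log_sub_log (hl : 0 < l) (hm : 0 < m) {t : ℝ} (ht : 0 ≤ t) :
    HasDerivAt (fun t => l * (log (m + t * l) - log (1 + t)))
      (l ^ 2 / (m + t * l) - l / (1 + t)) t := by
  have h₁ : HasDerivAt (fun t => m + t * l) l t := by
    simpa using ((hasDerivAt_id t).mul_const l).const_add m
  have h₂ : HasDerivAt (fun t => 1 + t) 1 t := (hasDerivAt_id t).const_add 1
  exact (((h₁.log (by positivity)).sub (h₂.log (by positivity))).const_mul l).congr_deriv
    (by ring)

theorem tendsto_mul_log_sub_log (hl : 0 < l) (hm : 0 < m) :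
    Tendsto (fun t => l * (log (m + t * l) - log (1 + t))) atTop (𝓝 (l * log l)) := by
  have hlim : Tendsto (fun t : ℝ => (m * t⁻¹ + l) / (1 * t⁻¹ + 1)) atTop (𝓝 l) := by
    have h (c d : ℝ) : Tendsto (fun t : ℝ => c * t⁻¹ + d) atTop (𝓝 d) := by
      simpa using (tendsto_inv_atTop_zero.const_mul c).add_const d
    simpa only [div_one, Pi.div_def] using Tendsto.div (h m l) (h 1 1) one_ne_zero
  refine ((hlim.log hl.ne').const_mul l).congr' ?_
  filter_upwards [eventually_gt_atTop 0] with t ht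
  rw [← log_div (by positivity) (by positivity)]
  congr 2
  field_simp

theorem integrableOn_sq_div_sub_div (hl : 0 < l) (hm : 0 < m) :
    IntegrableOn (fun t => l ^ 2 / (m + t * l) - l / (1 + t)) (Ioi 0) := by
  have hderiv : ∀ t ∈ Ici (0 : ℝ), HasDerivAt _ _ t :=
    fun _ ht => hasDerivAt_mul_log_sub_log hl hm ht
  have hlim := tendsto_mul_log_sub_log hl hm
  rcases le_total m l with h | h
  · refine integrableOn_Ioi_deriv_of_nonneg' hderiv (fun t ht => ?_) hlim
    have ht : 0 < t := ht
    rw [sub_nonneg, div_le_div_iff₀ (by positivity) (by positivity)]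
    nlinarith
  · refine integrableOn_Ioi_deriv_of_nonpos' hderiv (fun t ht => ?_) hlim
    have ht : 0 < t := ht
    rw [sub_nonpos, div_le_div_iff₀ (by positivity) (by positivity)]
    nlinarith

theorem integral_sq_div_sub_div (hl : 0 < l) (hm : 0 < m) :
    ∫ t in Ioi 0, (l ^ 2 / (m + t * l) - l / (1 + t)) = l * (log l - log m) := by
  rw [integral_Ioi_of_hasDerivAt_of_tendsto' (fun _ ht => hasDerivAt_mul_log_sub_log hl hm ht)
    (integrableOn_sq_div_sub_div hl hm) (tendsto_mul_log_sub_log hl hm)]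
  simp [mul_sub]

end ScalarIntegral

section SpectralTrace

variable {n : Type*} [Fintype n] [DecidableEq n] {A B : Matrix n n ℂ}

/-- The transition probability `|⟨uᵢ, vⱼ⟩|²` between the eigenvectors of two Hermitian matrices. -/
def overlap (hA : A.IsHermitian) (hB : B.IsHermitian) (i j : n) : ℝ :=
  Complex.normSq ((star (hA.eigenvectorUnitary : Matrix n n ℂ) * hB.eigenvectorUnitary) i j)

theorem overlap_eq_normSq (hA : A.IsHermitian) (hB : B.IsHermitian) (i j : n) :
    overlap hA hB i j = Complex.normSq
      ((star (hB.eigenvectorUnitary : Matrix n n ℂ) * hA.eigenvectorUnitary) j i) := by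
  rw [overlap, ← Complex.normSq_conj, ← Complex.star_def, ← Matrix.star_apply, star_mul, star_star]

theorem trace_cfc_mul_cfc (hA : A.IsHermitian) (hB : B.IsHermitian) (f g : ℝ → ℝ) :
    (cfc f A * cfc g B).trace =
      ↑(∑ i, ∑ j, overlap hA hB i j * (f (hA.eigenvalues i) * g (hB.eigenvalues j))) := by
  set U : Matrix n n ℂ := ↑hA.eigenvectorUnitary
  set V : Matrix n n ℂ := ↑hB.eigenvectorUnitary
  set W := star U * V with hW
  calc (cfc f A * cfc g B).trace
      = (diagonal (fun i => (f (hA.eigenvalues i) : ℂ)) * W *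
          diagonal (fun j => (g (hB.eigenvalues j) : ℂ)) * star W).trace := by
        rw [hA.cfc_eq, hB.cfc_eq, IsHermitian.cfc, IsHermitian.cfc,
          Unitary.conjStarAlgAut_apply, Unitary.conjStarAlgAut_apply, hW, star_mul, star_star]
        simp only [Matrix.mul_assoc]
        rw [Matrix.trace_mul_comm]
        simp only [Matrix.mul_assoc]
        rfl
    _ = _ := by
        rw [Matrix.trace, Complex.ofReal_sum]
        refine Finset.sum_congr rfl fun i _ => ?_
        rw [Matrix.diag_apply, Matrix.mul_apply, Complex.ofReal_sum]
        refine Finset.sum_congr rfl fun j _ => ?_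
        rw [Matrix.mul_diagonal, Matrix.diagonal_mul, Matrix.star_apply, Complex.star_def, overlap,
          Complex.ofReal_mul, ← Complex.mul_conj, Complex.ofReal_mul]
        ring

theorem trace_cfc (hA : A.IsHermitian) (f : ℝ → ℝ) :
    (cfc f A).trace = ↑(∑ i, f (hA.eigenvalues i)) := by
  rw [hA.cfc_eq, IsHermitian.cfc, Unitary.conjStarAlgAut_apply, Matrix.trace_mul_cycle,
    Unitary.coe_star_mul_self, Matrix.one_mul, Matrix.trace_diagonal]
  simp

theorem continuousOn_spectrum (f : ℝ → ℝ) : ContinuousOn f (spectrum ℝ A) :=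
  Matrix.finite_real_spectrum.continuousOn f

end SpectralTrace

section ResolventForm

variable {n : Type*} [Fintype n] {ρ σ : Matrix n n ℂ}

theorem trace_re_conjTranspose_mul_mul_comm (hσ : σ.IsHermitian) (X Y : Matrix n n ℂ) :
    (Yᴴ * σ * X).trace.re = (Xᴴ * σ * Y).trace.re := by
  rw [← Complex.conj_re, ← Complex.star_def, ← Matrix.trace_conjTranspose]
  simp only [conjTranspose_mul, conjTranspose_conjTranspose, hσ.eq, Matrix.mul_assoc]

/-- The concave functional of `X` whose maximum is `modularResolvent`; unlike the latter it is
linear in `ρ` and `σ`. -/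
def resolventForm (ρ σ : Matrix n n ℂ) (t : ℝ) (X : Matrix n n ℂ) : ℝ :=
  2 * (Xᴴ * ρ).trace.re - ((Xᴴ * σ * X).trace.re + t * (X * ρ * Xᴴ).trace.re)

theorem resolventForm_eq_sub (hρ : ρ.IsHermitian) (hσ : σ.IsHermitian) {t : ℝ}
    {Y : Matrix n n ℂ} (hY : σ * Y + (t : ℂ) • (Y * ρ) = ρ) (X : Matrix n n ℂ) :
    resolventForm ρ σ t X = (Yᴴ * ρ).trace.re -
      (((X - Y)ᴴ * σ * (X - Y)).trace.re + t * ((X - Y) * ρ * (X - Y)ᴴ).trace.re) := by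
  have hpair (Z : Matrix n n ℂ) :
      (Zᴴ * ρ).trace.re = (Zᴴ * σ * Y).trace.re + t * (Y * ρ * Zᴴ).trace.re := by
    conv_lhs => rw [← hY]
    rw [Matrix.mul_add, Matrix.trace_add, Matrix.mul_smul, Matrix.trace_smul,
      ← Matrix.trace_mul_comm (Y * ρ)]
    simp [Matrix.mul_assoc]
  have hσXY := trace_re_conjTranspose_mul_mul_comm hσ X Y
  have hρXY : (X * ρ * Yᴴ).trace.re = (Y * ρ * Xᴴ).trace.re := by
    simpa using trace_re_conjTranspose_mul_mul_comm hρ Yᴴ Xᴴ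
  simp only [resolventForm, hpair, conjTranspose_sub, Matrix.sub_mul, Matrix.mul_sub,
    Matrix.trace_sub, Complex.sub_re]
  rw [hσXY, hρXY]
  ring

end ResolventForm

section RelativeEntropy

open Real Set MeasureTheory

variable {n : Type*} [Fintype n] [DecidableEq n] {ρ σ : Matrix n n ℂ}

/-- `-Tr ρ log ρ`, without the trace correction of `vnEnt`. -/
def traceEntropy (ρ : Matrix n n ℂ) : ℝ :=
  -(ρ * cfc log ρ).trace.re

/-- Umegaki's relative entropy `D(ρ‖σ) = Tr ρ (log ρ - log σ)`; meant for positive definite `σ`,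
since `Real.log 0 = 0` hides the value `∞`. -/
def relEntropy (ρ σ : Matrix n n ℂ) : ℝ :=
  (ρ * cfc log ρ).trace.re - (ρ * cfc log σ).trace.re

/-- The quadratic form `⟨√ρ, (Δ + t)⁻¹ √ρ⟩`, where `Δ = L_σ R_ρ⁻¹` is the relative modular
operator, in terms of eigenvalues. -/
def modularResolvent (hρ : ρ.IsHermitian) (hσ : σ.IsHermitian) (t : ℝ) : ℝ :=
  ∑ i, ∑ j, overlap hρ hσ i j *
    (hρ.eigenvalues i ^ 2 / (hσ.eigenvalues j + t * hρ.eigenvalues i))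

theorem mul_cfc_log (hρ : ρ.IsHermitian) : ρ * cfc log ρ = cfc (fun x => x * log x) ρ := by
  rw [cfc_mul _ _ ρ (continuousOn_spectrum _) (continuousOn_spectrum _),
    cfc_id' ℝ ρ hρ.isSelfAdjoint]

theorem traceEntropy_eq_sum (hρ : ρ.IsHermitian) :
    traceEntropy ρ = ∑ i, negMulLog (hρ.eigenvalues i) := by
  rw [traceEntropy, mul_cfc_log hρ, trace_cfc hρ, Complex.ofReal_re, ← Finset.sum_neg_distrib]
  simp only [negMulLog_eq_neg]

theorem trace_re_eq_sum_overlap (hρ : ρ.IsHermitian) (hσ : σ.IsHermitian) :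
    ρ.trace.re = ∑ i, ∑ j, overlap hρ hσ i j * hρ.eigenvalues i := by
  have h := trace_cfc_mul_cfc hρ hσ (fun x => x) 1
  rw [cfc_id' ℝ ρ hρ.isSelfAdjoint, cfc_one ℝ σ hσ.isSelfAdjoint, Matrix.mul_one] at h
  simp [h]

theorem relEntropy_eq_sum_overlap (hρ : ρ.IsHermitian) (hσ : σ.IsHermitian) :
    relEntropy ρ σ = ∑ i, ∑ j, overlap hρ hσ i j *
      (hρ.eigenvalues i * (log (hρ.eigenvalues i) - log (hσ.eigenvalues j))) := by
  have h₁ := trace_cfc_mul_cfc hρ hσ (fun x => x * log x) 1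
  have h₂ := trace_cfc_mul_cfc hρ hσ (fun x => x) log
  rw [cfc_one ℝ σ hσ.isSelfAdjoint, Matrix.mul_one] at h₁
  rw [cfc_id' ℝ ρ hρ.isSelfAdjoint] at h₂
  rw [relEntropy, mul_cfc_log hρ, h₁, h₂, Complex.ofReal_re, Complex.ofReal_re]
  simp only [← Finset.sum_sub_distrib, Pi.one_apply, mul_one, mul_sub]

theorem modularResolvent_sub_trace (hρ : ρ.IsHermitian) (hσ : σ.IsHermitian) (t : ℝ) :
    modularResolvent hρ hσ t - ρ.trace.re / (1 + t) = ∑ i, ∑ j, overlap hρ hσ i j *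
      (hρ.eigenvalues i ^ 2 / (hσ.eigenvalues j + t * hρ.eigenvalues i) -
        hρ.eigenvalues i / (1 + t)) := by
  rw [trace_re_eq_sum_overlap hρ hσ, modularResolvent]
  simp only [Finset.sum_div, ← Finset.sum_sub_distrib, mul_sub, mul_div_assoc]

theorem integrableOn_modularResolvent_sub_trace (hρ : ρ.PosDef) (hσ : σ.PosDef) :
    IntegrableOn (fun t => modularResolvent hρ.1 hσ.1 t - ρ.trace.re / (1 + t)) (Ioi 0) := by
  simp only [modularResolvent_sub_trace]
  exact integrable_finsetSum _ fun i _ => integrable_finsetSum _ fun j _ =>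
    (integrableOn_sq_div_sub_div (hρ.eigenvalues_pos i) (hσ.eigenvalues_pos j)).const_mul _

theorem relEntropy_eq_integral (hρ : ρ.PosDef) (hσ : σ.PosDef) :
    relEntropy ρ σ = ∫ t in Ioi 0, (modularResolvent hρ.1 hσ.1 t - ρ.trace.re / (1 + t)) := by
  have hint (i j : n) := (integrableOn_sq_div_sub_div (hρ.eigenvalues_pos i)
    (hσ.eigenvalues_pos j)).const_mul (overlap hρ.1 hσ.1 i j)
  simp only [modularResolvent_sub_trace]
  rw [relEntropy_eq_sum_overlap hρ.1 hσ.1,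
    integral_finsetSum _ fun i _ => integrable_finsetSum _ fun j _ => hint i j]
  refine Finset.sum_congr rfl fun i _ => ?_
  rw [integral_finsetSum _ fun j _ => hint i j]
  refine Finset.sum_congr rfl fun j _ => ?_
  rw [integral_const_mul, integral_sq_div_sub_div (hρ.eigenvalues_pos i) (hσ.eigenvalues_pos j)]

/-- The maximiser of `resolventForm ρ σ t`, written in eigenbases of `σ` and `ρ`. -/
def resolventMaximizer (hρ : ρ.IsHermitian) (hσ : σ.IsHermitian) (t : ℝ) : Matrix n n ℂ :=
  hσ.eigenvectorUnitary *
    (of fun j i => (hρ.eigenvalues i / (hσ.eigenvalues j + t * hρ.eigenvalues i) : ℂ) *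
      (star (hσ.eigenvectorUnitary : Matrix n n ℂ) * hρ.eigenvectorUnitary) j i) *
    star (hρ.eigenvectorUnitary : Matrix n n ℂ)

theorem eq_mul_diagonal_mul_star (hρ : ρ.IsHermitian) (V : unitaryGroup n ℂ) :
    ρ = V * ((star (V : Matrix n n ℂ) * hρ.eigenvectorUnitary) *
      diagonal fun i => (hρ.eigenvalues i : ℂ)) * star (hρ.eigenvectorUnitary : Matrix n n ℂ) := by
  have hVV : (V : Matrix n n ℂ) * star (V : Matrix n n ℂ) = 1 := Unitary.coe_mul_star_self V
  conv_lhs => rw [hρ.spectral_theorem, Unitary.conjStarAlgAut_apply]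
  rw [← Matrix.mul_assoc (V : Matrix n n ℂ), ← Matrix.mul_assoc (V : Matrix n n ℂ), hVV,
    Matrix.one_mul]
  rfl

theorem mul_resolventMaximizer_add_smul_mul (hρ : ρ.PosDef) (hσ : σ.PosDef) {t : ℝ} (ht : 0 ≤ t) :
    σ * resolventMaximizer hρ.1 hσ.1 t + (t : ℂ) • (resolventMaximizer hρ.1 hσ.1 t * ρ) = ρ := by
  set l := hρ.1.eigenvalues with hl
  set m := hσ.1.eigenvalues with hm
  set U : Matrix n n ℂ := ↑hρ.1.eigenvectorUnitary with hU
  set V : Matrix n n ℂ := ↑hσ.1.eigenvectorUnitary with hV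
  have hUU : star U * U = 1 := Unitary.coe_star_mul_self _
  have hVV : star V * V = 1 := Unitary.coe_star_mul_self _
  have hρ_eq : ρ = U * diagonal (fun i => (l i : ℂ)) * star U := hρ.1.spectral_theorem
  have hσ_eq : σ = V * diagonal (fun j => (m j : ℂ)) * star V := hσ.1.spectral_theorem
  have hne (i j : n) : (m j + t * l i : ℂ) ≠ 0 := by
    have := hρ.eigenvalues_pos i
    have := hσ.eigenvalues_pos j
    exact_mod_cast (by positivity : m j + t * l i ≠ 0)
  rw [resolventMaximizer, ← hl, ← hm, ← hU, ← hV]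
  set Z : Matrix n n ℂ := of fun j i => (l i / (m j + t * l i) : ℂ) * (star V * U) j i with hZ
  calc σ * (V * Z * star U) + (t : ℂ) • (V * Z * star U * ρ)
      = V * (diagonal (fun j => (m j : ℂ)) * (star V * V) * Z +
          (t : ℂ) • (Z * (star U * U) * diagonal fun i => (l i : ℂ))) * star U := by
        rw [hρ_eq, hσ_eq]
        simp only [Matrix.mul_add, Matrix.add_mul, Matrix.mul_smul, Matrix.smul_mul,
          Matrix.mul_assoc]
    _ = V * ((star V * U) * diagonal fun i => (l i : ℂ)) * star U := by
        rw [hUU, hVV, Matrix.mul_one, Matrix.mul_one]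
        congr 2
        ext j i
        simp only [Matrix.add_apply, Matrix.smul_apply, Matrix.diagonal_mul, Matrix.mul_diagonal,
          smul_eq_mul, hZ, Matrix.of_apply]
        linear_combination (star V * U) j i * div_mul_cancel₀ (l i : ℂ) (hne i j)
    _ = ρ := (eq_mul_diagonal_mul_star hρ.1 _).symm

theorem trace_conjTranspose_resolventMaximizer_mul (hρ : ρ.IsHermitian) (hσ : σ.IsHermitian)
    (t : ℝ) : ((resolventMaximizer hρ hσ t)ᴴ * ρ).trace = modularResolvent hρ hσ t := by
  set U : Matrix n n ℂ := ↑hρ.eigenvectorUnitary with hU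
  set V : Matrix n n ℂ := ↑hσ.eigenvectorUnitary with hV
  set D : Matrix n n ℂ := diagonal fun i => (hρ.eigenvalues i : ℂ) with hD
  have hUU : star U * U = 1 := Unitary.coe_star_mul_self _
  have hVV : star V * V = 1 := Unitary.coe_star_mul_self _
  rw [resolventMaximizer, ← hU, ← hV]
  set Z : Matrix n n ℂ := of fun j i =>
    (hρ.eigenvalues i / (hσ.eigenvalues j + t * hρ.eigenvalues i) : ℂ) * (star V * U) j i with hZ
  calc ((V * Z * star U)ᴴ * ρ).trace
      = ((V * Z * star U)ᴴ * (V * ((star V * U) * D) * star U)).trace := by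
        conv_lhs => rw [eq_mul_diagonal_mul_star hρ hσ.eigenvectorUnitary]
    _ = (Zᴴ * (star V * V) * ((star V * U) * D) * (star U * U)).trace := by
        simp only [← star_eq_conjTranspose, star_mul, star_star]
        rw [Matrix.mul_assoc U, Matrix.trace_mul_comm U]
        simp only [Matrix.mul_assoc]
    _ = (Zᴴ * (star V * U * D)).trace := by rw [hUU, hVV, Matrix.mul_one, Matrix.mul_one]
    _ = modularResolvent hρ hσ t := by
        rw [Matrix.trace, modularResolvent, Complex.ofReal_sum]
        refine Finset.sum_congr rfl fun i _ => ?_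
        rw [Matrix.diag_apply, Matrix.mul_apply, Complex.ofReal_sum]
        refine Finset.sum_congr rfl fun j _ => ?_
        rw [overlap_eq_normSq, hD, Matrix.mul_diagonal, conjTranspose_apply, hZ, of_apply,
          star_mul', Complex.ofReal_mul, Complex.normSq_eq_conj_mul_self, ← Complex.star_def]
        simp only [Complex.star_def, map_div₀, map_add, map_mul, Complex.conj_ofReal,
          Complex.ofReal_div, Complex.ofReal_add, Complex.ofReal_mul, Complex.ofReal_pow]
        ring

theorem isGreatest_range_resolventForm (hρ : ρ.PosDef) (hσ : σ.PosDef) {t : ℝ} (ht : 0 ≤ t) :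
    IsGreatest (Set.range (resolventForm ρ σ t)) (modularResolvent hρ.1 hσ.1 t) := by
  have hform := resolventForm_eq_sub hρ.1 hσ.1 (mul_resolventMaximizer_add_smul_mul hρ hσ ht)
  simp only [trace_conjTranspose_resolventMaximizer_mul, Complex.ofReal_re] at hform
  set Y := resolventMaximizer hρ.1 hσ.1 t
  refine ⟨⟨Y, by simp [hform]⟩, ?_⟩
  rintro _ ⟨X, rfl⟩
  have hσX := (hσ.posSemidef.conjTranspose_mul_mul_same (X - Y)).trace_nonneg
  have hρX := (hρ.posSemidef.mul_mul_conjTranspose_same (X - Y)).trace_nonneg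
  rw [hform]
  have := mul_nonneg ht (Complex.nonneg_iff.1 hρX).1
  linarith [(Complex.nonneg_iff.1 hσX).1]

end RelativeEntropy

section Regularisation

variable {n : Type*} [Fintype n] [DecidableEq n] {A : Matrix n n ℂ}

theorem traceEntropy_add_smul_one (hA : A.IsHermitian) (c : ℝ) :
    traceEntropy (A + (c : ℂ) • 1) = ∑ i, Real.negMulLog (hA.eigenvalues i + c) := by
  have hA' : IsSelfAdjoint A := hA
  have hshift : A + (c : ℂ) • 1 = cfc (fun x => x + c) A := by
    rw [cfc_add_const c (fun x => x) A, cfc_id' ℝ A, Algebra.algebraMap_eq_smul_one]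
    simp
  have hherm : (A + (c : ℂ) • 1).IsHermitian := hshift ▸ cfc_predicate (R := ℝ) _ A
  rw [traceEntropy, mul_cfc_log hherm, hshift,
    ← cfc_comp' (fun x => x * Real.log x) (fun x => x + c) A
      ((A.finite_real_spectrum.image _).continuousOn _),
    trace_cfc hA, Complex.ofReal_re, ← Finset.sum_neg_distrib]
  simp only [Real.negMulLog_eq_neg]

theorem continuous_traceEntropy_add_smul_one (hA : A.IsHermitian) :
    Continuous fun c : ℝ => traceEntropy (A + (c : ℂ) • 1) := by
  simp only [traceEntropy_add_smul_one hA]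
  fun_prop

theorem vnEnt_eq_traceEntropy_sub (hA : A.IsHermitian) :
    vnEnt A = traceEntropy A - Real.negMulLog A.trace.re := by
  rw [vnEnt, dif_pos hA, traceEntropy_eq_sum hA, hA.trace_eq_sum_eigenvalues]
  simp

end Regularisation

section Restriction

open MeasureTheory

variable {k n : Type*} [Fintype k] [DecidableEq k] [Fintype n] [DecidableEq n]
  {φ : Matrix k k ℂ →⋆ₐ[ℂ] Matrix n n ℂ} {ρ σ : Matrix n n ℂ} {ρ' σ' : Matrix k k ℂ}

/-- `ρ'` is the density of the functional `X ↦ Tr(φ(X) ρ)`. For a subsystem inclusion `φ` this is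
the reduced density matrix. -/
def IsRestriction (φ : Matrix k k ℂ →⋆ₐ[ℂ] Matrix n n ℂ) (ρ : Matrix n n ℂ)
    (ρ' : Matrix k k ℂ) : Prop :=
  ∀ X, (φ X * ρ).trace = (X * ρ').trace

theorem IsRestriction.trace_eq (h : IsRestriction φ ρ ρ') : ρ'.trace = ρ.trace := by
  simpa using (h 1).symm

theorem IsRestriction.resolventForm_eq (hρ : IsRestriction φ ρ ρ') (hσ : IsRestriction φ σ σ')
    (t : ℝ) (X : Matrix k k ℂ) : resolventForm ρ σ t (φ X) = resolventForm ρ' σ' t X := by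
  have hφ : (φ X)ᴴ = φ Xᴴ := (map_star φ X).symm
  have h₁ : ((φ X)ᴴ * ρ).trace = (Xᴴ * ρ').trace := by rw [hφ, hρ]
  have h₂ : ((φ X)ᴴ * σ * φ X).trace = (Xᴴ * σ' * X).trace := by
    rw [Matrix.trace_mul_cycle, Matrix.trace_mul_cycle Xᴴ, hφ, ← map_mul, hσ]
  have h₃ : (φ X * ρ * (φ X)ᴴ).trace = (X * ρ' * Xᴴ).trace := by
    rw [Matrix.trace_mul_cycle, Matrix.trace_mul_cycle X, hφ, ← map_mul, hρ]
  rw [resolventForm, resolventForm, h₁, h₂, h₃]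

theorem IsRestriction.modularResolvent_le (hρρ' : IsRestriction φ ρ ρ')
    (hσσ' : IsRestriction φ σ σ') (hρ : ρ.PosDef) (hσ : σ.PosDef) (hρ' : ρ'.PosDef)
    (hσ' : σ'.PosDef) {t : ℝ} (ht : 0 ≤ t) :
    modularResolvent hρ'.1 hσ'.1 t ≤ modularResolvent hρ.1 hσ.1 t := by
  obtain ⟨X, hX⟩ := (isGreatest_range_resolventForm hρ' hσ' ht).1
  rw [← hX, ← hρρ'.resolventForm_eq hσσ']
  exact (isGreatest_range_resolventForm hρ hσ ht).2 ⟨φ X, rfl⟩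

theorem IsRestriction.relEntropy_le (hρρ' : IsRestriction φ ρ ρ') (hσσ' : IsRestriction φ σ σ')
    (hρ : ρ.PosDef) (hσ : σ.PosDef) (hρ' : ρ'.PosDef) (hσ' : σ'.PosDef) :
    relEntropy ρ' σ' ≤ relEntropy ρ σ := by
  rw [relEntropy_eq_integral hρ' hσ', relEntropy_eq_integral hρ hσ]
  refine setIntegral_mono_on (integrableOn_modularResolvent_sub_trace hρ' hσ')
    (integrableOn_modularResolvent_sub_trace hρ hσ) measurableSet_Ioi fun t ht => ?_
  rw [hρρ'.trace_eq]
  exact sub_le_sub_right (hρρ'.modularResolvent_le hσσ' hρ hσ hρ' hσ' (le_of_lt ht)) _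

theorem map_cfc_log (φ : Matrix k k ℂ →⋆ₐ[ℂ] Matrix n n ℂ) (hρ' : ρ'.IsHermitian) :
    φ (cfc Real.log ρ') = cfc Real.log (φ ρ') :=
  StarAlgHomClass.map_cfc φ Real.log ρ' (continuousOn_spectrum _)
    φ.toLinearMap.continuous_of_finiteDimensional hρ'.isSelfAdjoint
    (hρ'.isSelfAdjoint.map φ)

theorem IsRestriction.traceEntropy_eq (h : IsRestriction φ ρ ρ') (hρ' : ρ'.IsHermitian) :
    traceEntropy ρ' = -(ρ * cfc Real.log (φ ρ')).trace.re := by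
  rw [traceEntropy, Matrix.trace_mul_comm, ← h, map_cfc_log φ hρ', Matrix.trace_mul_comm]

end Restriction

section StrongSubadditivity

variable {k₁ k₂ k₃ n : Type*} [Fintype k₁] [DecidableEq k₁] [Fintype k₂] [DecidableEq k₂]
  [Fintype k₃] [DecidableEq k₃] [Fintype n] [DecidableEq n]
  {φ : Matrix k₁ k₁ ℂ →⋆ₐ[ℂ] Matrix n n ℂ} {ψ : Matrix k₂ k₂ ℂ →⋆ₐ[ℂ] Matrix n n ℂ}
  {χ : Matrix k₃ k₃ ℂ →⋆ₐ[ℂ] Matrix n n ℂ} {ρ : Matrix n n ℂ}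
  {ρ₁ τ : Matrix k₁ k₁ ℂ} {ρ₂ : Matrix k₂ k₂ ℂ} {ρ₃ : Matrix k₃ k₃ ℂ}

/-- The hypotheses on `τ` say that the conditional expectation onto the range of `φ` maps the range
of `ψ` into that of `χ`, as for commuting squares of subalgebras. -/
theorem traceEntropy_add_le (h₁ : IsRestriction φ ρ ρ₁) (h₂ : IsRestriction ψ ρ ρ₂)
    (h₃ : IsRestriction χ ρ ρ₃) (hτ : IsRestriction φ (ψ ρ₂) τ) (hτχ : φ τ = χ ρ₃)
    (hρ : ρ.PosDef) (hρ₁ : ρ₁.PosDef) (hψ : (ψ ρ₂).PosDef) (hρ₂ : ρ₂.IsHermitian)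
    (hρ₃ : ρ₃.IsHermitian) (hτ_pos : τ.PosDef) :
    traceEntropy ρ + traceEntropy ρ₃ ≤ traceEntropy ρ₁ + traceEntropy ρ₂ := by
  have hρψ : relEntropy ρ (ψ ρ₂) = traceEntropy ρ₂ - traceEntropy ρ := by
    rw [h₂.traceEntropy_eq hρ₂, relEntropy, traceEntropy]
    ring
  have hρτ : relEntropy ρ₁ τ = traceEntropy ρ₃ - traceEntropy ρ₁ := by
    have hlog : (ρ₁ * cfc Real.log τ).trace = (ρ * cfc Real.log (χ ρ₃)).trace := by
      rw [Matrix.trace_mul_comm, ← h₁, map_cfc_log φ hτ_pos.1, hτχ, Matrix.trace_mul_comm]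
    rw [h₃.traceEntropy_eq hρ₃, relEntropy, hlog, traceEntropy]
    ring
  have := h₁.relEntropy_le hτ hρ hψ hρ₁ hτ_pos
  linarith

end StrongSubadditivity

section PartialTrace

open scoped Kronecker

variable {k g n : Type*} [Fintype g]

/-- The partial trace over the factor `g` of an index type `n ≃ k × g`. -/
def partialTrace (e : n ≃ k × g) (M : Matrix n n ℂ) : Matrix k k ℂ :=
  of fun x y => ∑ z, M (e.symm (x, z)) (e.symm (y, z))

theorem isHermitian_partialTrace (e : n ≃ k × g) {M : Matrix n n ℂ} (hM : M.IsHermitian) :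
    (partialTrace e M).IsHermitian := by
  ext x y
  simp [partialTrace, hM.apply]

theorem posDef_partialTrace [Nonempty g] (e : n ≃ k × g) {M : Matrix n n ℂ} (hM : M.PosDef) :
    (partialTrace e M).PosDef := by
  have hsum : partialTrace e M =
      ∑ z, M.submatrix (fun x => e.symm (x, z)) fun x => e.symm (x, z) := by
    ext x y
    simp [partialTrace, Matrix.sum_apply]
  rw [hsum]
  exact Matrix.posDef_sum Finset.univ_nonempty fun z _ =>
    hM.submatrix fun x y h => by simpa using h

theorem partialTrace_add_smul_one [DecidableEq k] [DecidableEq n] (e : n ≃ k × g)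
    (M : Matrix n n ℂ) (c : ℂ) :
    partialTrace e (M + c • 1) = partialTrace e M + (c * Fintype.card g) • 1 := by
  ext x y
  simp [partialTrace, Finset.sum_add_distrib, Matrix.one_apply, mul_comm]

variable [Fintype k] [DecidableEq k] [DecidableEq g] [Fintype n] [DecidableEq n]

/-- The inclusion `X ↦ X ⊗ 1` of the observables of a tensor factor. -/
def ampliation (e : n ≃ k × g) : Matrix k k ℂ →⋆ₐ[ℂ] Matrix n n ℂ where
  toFun X := (X ⊗ₖ (1 : Matrix g g ℂ)).submatrix e e
  map_one' := by rw [Matrix.one_kronecker_one, Matrix.submatrix_one_equiv]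
  map_mul' X Y := by
    rw [Matrix.submatrix_mul_equiv, ← Matrix.mul_kronecker_mul, Matrix.one_mul]
  map_zero' := by rw [Matrix.zero_kronecker]; rfl
  map_add' X Y := by rw [Matrix.add_kronecker]; rfl
  commutes' c := by
    simp only [Algebra.algebraMap_eq_smul_one, Matrix.smul_kronecker, Matrix.one_kronecker_one,
      Matrix.submatrix_smul, Pi.smul_apply, Matrix.submatrix_one_equiv]
  map_star' X := by
    simp only [star_eq_conjTranspose, conjTranspose_submatrix, conjTranspose_kronecker,
      conjTranspose_one]

theorem ampliation_apply (e : n ≃ k × g) (X : Matrix k k ℂ) (x y : n) :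
    ampliation e X x y = if (e x).2 = (e y).2 then X (e x).1 (e y).1 else 0 := by
  change X _ _ * (1 : Matrix g g ℂ) _ _ = _
  rw [Matrix.one_apply, mul_ite, mul_one, mul_zero]

theorem posDef_ampliation (e : n ≃ k × g) {X : Matrix k k ℂ} (hX : X.PosDef) :
    (ampliation e X).PosDef :=
  (hX.kronecker Matrix.PosDef.one).submatrix e.injective

theorem isRestriction_partialTrace (e : n ≃ k × g) (M : Matrix n n ℂ) :
    IsRestriction (ampliation e) M (partialTrace e M) := by
  intro X
  calc (ampliation e X * M).trace
      = ∑ p : k × g, ∑ q : k × g,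
          ampliation e X (e.symm p) (e.symm q) * M (e.symm q) (e.symm p) := by
        simp only [Matrix.trace, Matrix.diag_apply, Matrix.mul_apply]
        rw [← e.symm.sum_comp]
        exact Finset.sum_congr rfl fun p _ => (e.symm.sum_comp _).symm
    _ = ∑ x, ∑ y, ∑ z, X x y * M (e.symm (y, z)) (e.symm (x, z)) := by
        simp only [ampliation_apply, Equiv.apply_symm_apply, Fintype.sum_prod_type, ite_mul,
          zero_mul, Finset.sum_ite_eq, Finset.mem_univ, if_true]
        exact Finset.sum_congr rfl fun x _ => Finset.sum_comm
    _ = (X * partialTrace e M).trace := by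
        simp only [Matrix.trace, Matrix.diag_apply, Matrix.mul_apply, partialTrace,
          Matrix.of_apply, Finset.mul_sum]

end PartialTrace

section Configurations

variable {N : ℕ}

/-- The factorisation of the configurations of `A₁ ... A_N B` behind `margB S`: those of `S` and
`B`, times those of the subsystems traced out. -/
def splitEquiv (α : Fin N → Type*) (β : Type*) (S : Finset (Fin N)) :
    (∀ i, α i) × β ≃ ((∀ i : {x // x ∈ S}, α i) × β) × ∀ i : {x // x ∉ S}, α i where
  toFun p := ((fun i => p.1 i, p.2), fun i => p.1 i)
  invFun q := (fun i => if h : i ∈ S then q.1.1 ⟨i, h⟩ else q.2 ⟨i, h⟩, q.1.2)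
  left_inv p := by ext <;> simp
  right_inv q := by
    ext i
    · simp
    · simp
    · exact dif_neg i.2

/-- The inclusion of the observables of the subsystems in `S` and `B`. -/
def inclB (α : Fin N → Type*) (β : Type*) [∀ i, Fintype (α i)] [∀ i, DecidableEq (α i)]
    [Fintype β] [DecidableEq β] (S : Finset (Fin N)) :
    Matrix ((∀ i : {x // x ∈ S}, α i) × β) ((∀ i : {x // x ∈ S}, α i) × β) ℂ →⋆ₐ[ℂ]
      Matrix ((∀ i, α i) × β) ((∀ i, α i) × β) ℂ :=
  ampliation (splitEquiv α β S)

variable {α : Fin N → Type*} [∀ i, Fintype (α i)] [∀ i, DecidableEq (α i)]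
  {M : Type*} [AddCommMonoid M]

theorem sum_dite_mem_eq_sum_filter (S : Finset (Fin N)) (x : ∀ i, α i) (F : (∀ i, α i) → M) :
    ∑ g : ∀ i : {x // x ∉ S}, α i, F (fun i => if h : i ∈ S then x i else g ⟨i, h⟩) =
      ∑ z with ∀ i ∈ S, z i = x i, F z := by
  refine Finset.sum_bij' (fun g _ i => if h : i ∈ S then x i else g ⟨i, h⟩) (fun z _ i => z i)
    ?_ ?_ ?_ ?_ ?_
  · intro g _
    simp +contextual
  · simp
  · intro g _
    ext i
    simp [i.2]
  · intro z hz
    ext i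
    have := (Finset.mem_filter.1 hz).2 i
    by_cases h : i ∈ S <;> simp_all
  · simp

theorem sum_filter_sum_filter_eq {S T : Finset (Fin N)} (hST : Codisjoint S T)
    (x : ∀ i, α i) (F : (∀ i, α i) → M) :
    ∑ z : ∀ i, α i with ∀ i ∈ S, z i = x i, ∑ w : ∀ i, α i with ∀ i ∈ T, w i = z i, F w =
      ∑ w : ∀ i, α i with ∀ i ∈ S ∩ T, w i = x i, F w := by
  rw [Finset.sum_comm' (t' := {w | ∀ i ∈ S ∩ T, w i = x i}) (s' := fun w => {S.piecewise x w})]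
  · simp only [Finset.sum_singleton]
  intro z w
  have hz : z = S.piecewise x w ↔ ∀ i, z i = if i ∈ S then x i else w i := funext_iff
  simp only [Finset.mem_filter, Finset.mem_univ, true_and, Finset.mem_singleton, hz,
    Finset.mem_inter, ← forall_and]
  have hT (i) : i ∉ S → i ∈ T := (Finset.codisjoint_left.1 hST ·)
  refine forall_congr' fun i => ?_
  grind

end Configurations

section Marginals

open Filter Topology

variable {N : ℕ} {α : Fin N → Type*} {β : Type*}

theorem margB_eq_partialTrace [∀ i, Fintype (α i)] (S : Finset (Fin N))
    (ω : Matrix ((∀ i, α i) × β) ((∀ i, α i) × β) ℂ) :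
    margB S ω = partialTrace (splitEquiv α β S) ω := rfl

theorem isHermitian_margB [∀ i, Fintype (α i)] (S : Finset (Fin N))
    {ω : Matrix ((∀ i, α i) × β) ((∀ i, α i) × β) ℂ} (hω : ω.IsHermitian) :
    (margB S ω).IsHermitian :=
  isHermitian_partialTrace (splitEquiv α β S) hω

theorem margB_of_isEmpty [∀ i, Fintype (α i)] [IsEmpty ((∀ i, α i) × β)] (S : Finset (Fin N))
    (ω : Matrix ((∀ i, α i) × β) ((∀ i, α i) × β) ℂ) : margB S ω = 0 := by
  ext x y
  exact Finset.sum_eq_zero fun g _ => isEmptyElim ((splitEquiv α β S).symm (x, g))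

variable [∀ i, Fintype (α i)] [∀ i, DecidableEq (α i)] [Fintype β] [DecidableEq β]
  (ω : Matrix ((∀ i, α i) × β) ((∀ i, α i) × β) ℂ) (S : Finset (Fin N))

theorem isRestriction_margB : IsRestriction (inclB α β S) ω (margB S ω) :=
  isRestriction_partialTrace _ ω

theorem inclB_margB_apply (x y : ∀ i, α i) (b c : β) :
    inclB α β S (margB S ω) (x, b) (y, c) = if ∀ i ∉ S, x i = y i then
      ∑ z with ∀ i ∈ S, z i = x i, ω (z, b) (S.piecewise y z, c) else 0 := by
  have hoff : (fun i : {i // i ∉ S} => x i) = (fun i : {i // i ∉ S} => y i) ↔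
      ∀ i ∉ S, x i = y i := by
    simp [funext_iff]
  rw [inclB, ampliation_apply, ← sum_dite_mem_eq_sum_filter]
  refine if_congr hoff (Finset.sum_congr rfl fun g _ => ?_) rfl
  change ω (_, b) (_, c) = _
  congr 2
  ext i
  by_cases h : i ∈ S <;> simp [h, splitEquiv]

theorem inclB_margB_inclB_margB {S T : Finset (Fin N)} (hST : Codisjoint S T) :
    inclB α β S (margB S (inclB α β T (margB T ω))) = inclB α β (S ∩ T) (margB (S ∩ T) ω) := by
  ext ⟨x, b⟩ ⟨y, c⟩
  have hT {i} (hi : i ∉ T) : i ∈ S := Finset.codisjoint_right.1 hST hi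
  have hoff : (∀ i ∉ S ∩ T, x i = y i) ↔ (∀ i ∉ S, x i = y i) ∧ ∀ i ∉ T, x i = y i := by
    grind
  simp only [inclB_margB_apply, hoff, ite_and]
  refine if_congr Iff.rfl ?_ rfl
  rw [← sum_filter_sum_filter_eq hST, Finset.ite_sum_zero]
  refine Finset.sum_congr rfl fun z hz => ?_
  have hz : ∀ i ∈ S, z i = x i := by simpa using hz
  have hcond : (∀ i ∉ T, z i = S.piecewise y z i) ↔ ∀ i ∉ T, x i = y i :=
    forall₂_congr fun i hi => by rw [S.piecewise_eq_of_mem _ _ (hT hi), hz i (hT hi)]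
  refine if_congr hcond (Finset.sum_congr rfl fun w hw => ?_) rfl
  have hw : ∀ i ∈ T, w i = z i := by simpa using hw
  congr 2
  ext i
  simp only [Finset.piecewise]
  grind

theorem inclB_univ_margB : inclB α β Finset.univ (margB Finset.univ ω) = ω := by
  ext ⟨x, b⟩ ⟨y, c⟩
  have hfilter : ({z | ∀ i ∈ Finset.univ, z i = x i} : Finset (∀ i, α i)) = {x} := by
    ext z
    simp [funext_iff]
  rw [inclB_margB_apply, if_pos (by simp), hfilter, Finset.sum_singleton, Finset.piecewise_univ]

variable {ω}

theorem traceEntropy_margB_univ (hω : ω.IsHermitian) :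
    traceEntropy (margB Finset.univ ω) = traceEntropy ω := by
  rw [(isRestriction_margB ω Finset.univ).traceEntropy_eq (isHermitian_margB _ hω),
    inclB_univ_margB, traceEntropy]

theorem traceEntropy_margB_add_le_of_posDef {S T : Finset (Fin N)} (hST : Codisjoint S T)
    (hω : ω.PosDef) :
    traceEntropy (margB Finset.univ ω) + traceEntropy (margB (S ∩ T) ω) ≤
      traceEntropy (margB S ω) + traceEntropy (margB T ω) := by
  rcases isEmpty_or_nonempty ((∀ i, α i) × β) with _ | ⟨⟨x, _⟩⟩
  · simp [margB_of_isEmpty, traceEntropy]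
  have hmarg {ω : Matrix ((∀ i, α i) × β) ((∀ i, α i) × β) ℂ} (hω : ω.PosDef)
      (S : Finset (Fin N)) : (margB S ω).PosDef :=
    have : Nonempty (∀ i : {i // i ∉ S}, α i) := ⟨fun i => x i⟩
    posDef_partialTrace (splitEquiv α β S) hω
  have hincl : (inclB α β T (margB T ω)).PosDef := posDef_ampliation _ (hmarg hω T)
  rw [traceEntropy_margB_univ hω.1]
  exact traceEntropy_add_le (isRestriction_margB ω S) (isRestriction_margB ω T)
    (isRestriction_margB ω (S ∩ T)) (isRestriction_margB _ S) (inclB_margB_inclB_margB ω hST)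
    hω (hmarg hω S) hincl (hmarg hω T).1 (hmarg hω (S ∩ T)).1 (hmarg hincl S)

theorem continuous_traceEntropy_margB_add_smul_one (hω : ω.IsHermitian) (S : Finset (Fin N)) :
    Continuous fun ε : ℝ => traceEntropy (margB S (ω + (ε : ℂ) • 1)) := by
  have h := continuous_traceEntropy_add_smul_one (isHermitian_margB S hω)
  refine (h.comp (continuous_mul_const
    (Fintype.card (∀ i : {i // i ∉ S}, α i) : ℝ))).congr fun ε => ?_
  rw [margB_eq_partialTrace, margB_eq_partialTrace, partialTrace_add_smul_one]
  simp only [Function.comp_apply, Complex.ofReal_mul, Complex.ofReal_natCast]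

theorem traceEntropy_margB_add_le {S T : Finset (Fin N)} (hST : Codisjoint S T)
    (hω : ω.PosSemidef) :
    traceEntropy (margB Finset.univ ω) + traceEntropy (margB (S ∩ T) ω) ≤
      traceEntropy (margB S ω) + traceEntropy (margB T ω) := by
  have hlim (S : Finset (Fin N)) :
      Tendsto (fun ε : ℝ => traceEntropy (margB S (ω + (ε : ℂ) • 1))) (𝓝[>] 0)
        (𝓝 (traceEntropy (margB S ω))) := by
    simpa using ((continuous_traceEntropy_margB_add_smul_one hω.1 S).tendsto 0).mono_left
      nhdsWithin_le_nhds
  refine le_of_tendsto_of_tendsto ((hlim _).add (hlim _)) ((hlim S).add (hlim T)) ?_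
  filter_upwards [self_mem_nhdsWithin] with ε hε
  have hε : (0 : ℂ) < ε := by exact_mod_cast hε
  exact traceEntropy_margB_add_le_of_posDef hST
    (Matrix.PosDef.posSemidef_add hω (Matrix.PosDef.one.smul hε))

theorem vnEnt_margB_add_le {S T : Finset (Fin N)} (hST : Codisjoint S T) (hω : ω.PosSemidef) :
    vnEnt (margB Finset.univ ω) + vnEnt (margB (S ∩ T) ω) ≤
      vnEnt (margB S ω) + vnEnt (margB T ω) := by
  have hvn (S : Finset (Fin N)) :
      vnEnt (margB S ω) = traceEntropy (margB S ω) - Real.negMulLog ω.trace.re := by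
    rw [vnEnt_eq_traceEntropy_sub (isHermitian_margB S hω.1),
      (isRestriction_margB ω S).trace_eq]
  simp only [hvn]
  linarith [traceEntropy_margB_add_le hST hω]

end Marginals

section Combinatorics

variable {ι : Type*} [Fintype ι] [DecidableEq ι] {f : Finset ι → ℝ}

/-- Each chain step adds an element to `S`: `Sᶜ` and `{i}ᶜ` are codisjoint, and meet in
`(insert i S)ᶜ`. -/
theorem card_sub_one_mul_add_le_sum_compl_singleton
    (hf : ∀ S T, Codisjoint S T → f Finset.univ + f (S ∩ T) ≤ f S + f T) :
    (Fintype.card ι - 1) * f Finset.univ + f ∅ ≤ ∑ i, f {i}ᶜ := by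
  have hchain (S : Finset ι) : (S.card - 1) * f Finset.univ + f Sᶜ ≤ ∑ i ∈ S, f {i}ᶜ := by
    induction S using Finset.induction_on with
    | empty => simp
    | insert i S hi ih =>
      have hstep := hf Sᶜ {i}ᶜ <| codisjoint_iff_compl_le_right.2 <| by
        rw [compl_compl]
        exact Finset.subset_compl_singleton.2 hi
      rw [← Finset.compl_union, Finset.union_comm, ← Finset.insert_eq] at hstep
      rw [Finset.sum_insert hi, Finset.card_insert_of_notMem hi]
      push_cast
      linarith
  simpa using hchain Finset.univ

end Combinatorics

theorem secMon_nonneg_general {N : ℕ} {α : Fin N → Type*} {β : Type*}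
    [∀ i, Fintype (α i)] [∀ i, DecidableEq (α i)] [Fintype β] [DecidableEq β]
    (ω : Matrix ((∀ i, α i) × β) ((∀ i, α i) × β) ℂ) (hω : ω.PosSemidef) :
    0 ≤ secMon ω := by
  have h := card_sub_one_mul_add_le_sum_compl_singleton (f := fun S => vnEnt (margB S ω))
    fun S T hST => vnEnt_margB_add_le hST hω
  rw [Fintype.card_fin] at h
  rw [secMon]
  linarith

/-- The conditional secrecy monotone is nonnegative on states. -/
theorem secMon_nonneg {N : ℕ} {α : Fin N → Type*} {β : Type*}
    [∀ i, Fintype (α i)] [∀ i, DecidableEq (α i)] [Fintype β] [DecidableEq β]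
    (ω : Matrix ((∀ i, α i) × β) ((∀ i, α i) × β) ℂ) (hω : IsState ω) :
    0 ≤ secMon ω :=
  secMon_nonneg_general ω hω.1
end
end

section
/- Let F(ω) = Σ_k α_k H(ω_{X_k}) be a real linear combination of marginal entropies of states of a finite-dimensional n-partite system that is a concave function of the state. Then for any two states ω¹, ω² with ε = ½‖ω¹−ω²‖₁ < 1, |F(ω¹) − F(ω²)| ≤ ε·sup_{ω,ω'}|F(ω)−F(ω')| + (1+ε)·h₂(ε/(1+ε))·Σ_{k: α_k>0} α_k. -/
open Matrix
open scoped ComplexOrder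

noncomputable section

section Multipartite

variable {N : ℕ} {α : Fin N → Type*}
  [∀ i, Fintype (α i)] [∀ i, DecidableEq (α i)]

/-- The marginal of an operator on `A₁ ⊗ ... ⊗ A_N` on the subsystems in `S`
(all subsystems outside `S` are traced out). -/
def marg (S : Finset (Fin N)) (ω : Matrix (∀ i, α i) (∀ i, α i) ℂ) :
    Matrix (∀ i : {x : Fin N // x ∈ S}, α i.1) (∀ i : {x : Fin N // x ∈ S}, α i.1) ℂ :=
  Matrix.of fun p q =>
    ∑ g : ∀ i : {x : Fin N // x ∉ S}, α i.1,
      ω (fun i => if h : i ∈ S then p ⟨i, h⟩ else g ⟨i, h⟩)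
        (fun i => if h : i ∈ S then q ⟨i, h⟩ else g ⟨i, h⟩)

end Multipartite

/-- The trace norm of a matrix: the sum of its singular values. -/
def traceNorm {n : Type*} [Fintype n] [DecidableEq n] (M : Matrix n n ℂ) : ℝ :=
  ∑ i, Real.sqrt ((Matrix.posSemidef_conjTranspose_mul_self M).1.eigenvalues i)

/-- A linear combination `F(ω) = Σ_k c_k H(ω_{X_k})` of marginal entropies. -/
def entCombo {N : ℕ} {α : Fin N → Type*} [∀ i, Fintype (α i)] [∀ i, DecidableEq (α i)]
    {K : Type*} [Fintype K] (c : K → ℝ) (X : K → Finset (Fin N))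
    (ω : Matrix (∀ i, α i) (∀ i, α i) ℂ) : ℝ :=
  ∑ k, c k * vnEnt (marg (X k) ω)

/-!
Put `ε = ½‖ω₁ - ω₂‖₁`. The positive and negative parts of `ω₁ - ω₂` both have trace `ε`, so they are
`ε τ₁` and `ε τ₂` for states `τ₁`, `τ₂`, and `ω* = (ω₁ + ε τ₂) / (1 + ε) = (ω₂ + ε τ₁) / (1 + ε)`
is a mixture of states in two ways. Bound `F(ω*)` from below through the first mixture, by concavity
of `F`, and from above through the second: each entropy is concave, and exceeds the corresponding
mixture of entropies by at most the binary entropy of the weights, so only the positive coefficients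
contribute an error. Comparing the two bounds gives the theorem.

Both properties of the entropy are facts about `A ↦ Tr f(A)` for a concave function `f`: concavity
on positive semidefinite matrices and, if `f 0 = 0`, Rotfel'd's subadditivity
`Tr f(A + B) ≤ Tr f(A) + Tr f(B)`. They follow from Peierls' inequality `Tr f(A) ≤ ∑ f(Aᵢᵢ)`.
-/

lemma convex_setOf_posSemidef {𝕜 n : Type*} [RCLike 𝕜] :
    Convex ℝ {A : Matrix n n 𝕜 | A.PosSemidef} :=
  fun _ hA _ hB _ _ ha hb _ => (hA.smul ha).add (hB.smul hb)

section SpectralSum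

variable {𝕜 m n : Type*} [RCLike 𝕜] [Fintype m] [DecidableEq m] [Fintype n] [DecidableEq n]
  {A B : Matrix n n 𝕜} {f : ℝ → ℝ} {s : Set ℝ}

/-- The trace `Tr f(A)` of a function of a Hermitian matrix: the sum of `f` over the eigenvalues
with multiplicity. It is read off the characteristic polynomial, so that it needs no proof that
`A` is Hermitian and is visibly a similarity invariant. -/
def spectralSum (f : ℝ → ℝ) (A : Matrix n n 𝕜) : ℝ :=
  (A.charpoly.roots.map fun z => f (RCLike.re z)).sum

lemma spectralSum_eq_sum_eigenvalues (f : ℝ → ℝ) (hA : A.IsHermitian) :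
    spectralSum f A = ∑ i, f (hA.eigenvalues i) := by
  rw [spectralSum, hA.roots_charpoly_eq_eigenvalues, Multiset.map_map]
  simp [Function.comp_def]

lemma trace_eq_spectralSum_id (hA : A.IsHermitian) : A.trace = (spectralSum id A : 𝕜) := by
  rw [hA.trace_eq_sum_eigenvalues, spectralSum_eq_sum_eigenvalues id hA]
  simp

lemma spectralSum_cfc (f g : ℝ → ℝ) (hA : A.IsHermitian) :
    spectralSum f (cfc g A) = spectralSum (f ∘ g) A := by
  rw [spectralSum_eq_sum_eigenvalues _ hA, spectralSum, hA.charpoly_cfc_eq, Polynomial.roots_prod]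
  · simp
  · simp [Finset.prod_ne_zero_iff, Polynomial.X_sub_C_ne_zero]

lemma spectralSum_smul (f : ℝ → ℝ) (hA : A.IsHermitian) (t : ℝ) :
    spectralSum f (t • A) = spectralSum (fun x => f (t * x)) A := by
  rw [← cfc_const_mul_id t A hA.isSelfAdjoint, spectralSum_cfc f _ hA, Function.comp_def]

lemma spectralSum_mul_comm (hf0 : f 0 = 0) (B : Matrix m n 𝕜) (C : Matrix n m 𝕜) :
    spectralSum f (B * C) = spectralSum f (C * B) := by
  have hroots := congrArg (fun p : Polynomial 𝕜 => (p.roots.map fun z => f (RCLike.re z)).sum)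
    (charpoly_mul_comm' B C)
  rw [Polynomial.roots_mul, Polynomial.roots_mul] at hroots
  · simpa [spectralSum, hf0, Multiset.map_nsmul, Multiset.sum_nsmul] using hroots
  all_goals exact mul_ne_zero (pow_ne_zero _ Polynomial.X_ne_zero) (charpoly_monic _).ne_zero

lemma spectralSum_star_mul_mul (f : ℝ → ℝ) (A : Matrix n n 𝕜) (U : unitaryGroup n 𝕜) :
    spectralSum f (star U.1 * A * U.1) = spectralSum f A := by
  rw [spectralSum, charpoly_mul_comm, ← mul_assoc, ← Unitary.coe_star, Unitary.coe_mul_star_self,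
    one_mul, spectralSum]

lemma re_diag_eq_sum_eigenvalues (hA : A.IsHermitian) (i : n) :
    RCLike.re (A i i) = ∑ j, ‖hA.eigenvectorUnitary.1 i j‖ ^ 2 * hA.eigenvalues j := by
  conv_lhs => rw [hA.spectral_theorem, Unitary.conjStarAlgAut_apply, mul_apply, map_sum]
  refine Finset.sum_congr rfl fun j _ => ?_
  rw [mul_diagonal, star_apply, RCLike.star_def, mul_right_comm, RCLike.mul_conj,
    Function.comp_apply]
  norm_cast

lemma sum_norm_sq_row_unitary (U : unitaryGroup n 𝕜) (i : n) : ∑ j, ‖U.1 i j‖ ^ 2 = 1 := by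
  have h := congrFun₂ (Unitary.coe_mul_star_self U) i i
  simp only [Unitary.coe_star, mul_apply, star_apply, RCLike.star_def, RCLike.mul_conj,
    one_apply_eq] at h
  exact_mod_cast h

lemma sum_norm_sq_col_unitary (U : unitaryGroup n 𝕜) (j : n) : ∑ i, ‖U.1 i j‖ ^ 2 = 1 := by
  simpa using sum_norm_sq_row_unitary (star U) j

lemma spectralSum_le_sum_diag (hf : ConcaveOn ℝ s f) (hA : A.IsHermitian)
    (hs : ∀ i, hA.eigenvalues i ∈ s) :
    spectralSum f A ≤ ∑ i, f (RCLike.re (A i i)) := by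
  set U := hA.eigenvectorUnitary
  calc spectralSum f A
      = ∑ j, ∑ i, ‖U.1 i j‖ ^ 2 * f (hA.eigenvalues j) := by
        simp_rw [spectralSum_eq_sum_eigenvalues f hA, ← Finset.sum_mul, sum_norm_sq_col_unitary,
          one_mul]
    _ = ∑ i, ∑ j, ‖U.1 i j‖ ^ 2 * f (hA.eigenvalues j) := Finset.sum_comm
    _ ≤ ∑ i, f (RCLike.re (A i i)) := Finset.sum_le_sum fun i _ => by
        rw [re_diag_eq_sum_eigenvalues hA]
        exact hf.le_map_sum (fun j _ => by positivity) (sum_norm_sq_row_unitary U i)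
          fun j _ => hs j

lemma concaveOn_spectralSum (hf : ConcaveOn ℝ (Set.Ici 0) f) :
    ConcaveOn ℝ {A : Matrix n n 𝕜 | A.PosSemidef} (spectralSum f) := by
  refine ⟨convex_setOf_posSemidef, fun A hA B hB a b ha hb hab => ?_⟩
  have hC := convex_setOf_posSemidef hA hB ha hb hab
  set U := hC.1.eigenvectorUnitary
  let d (M : Matrix n n 𝕜) (i : n) : ℝ := RCLike.re ((star U.1 * M * U.1) i i)
  have conj_posSemidef {M : Matrix n n 𝕜} (hM : M.PosSemidef) : (star U.1 * M * U.1).PosSemidef :=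
    hM.conjTranspose_mul_mul_same U.1
  have d_nonneg {M : Matrix n n 𝕜} (hM : M.PosSemidef) (i : n) : 0 ≤ d M i :=
    (RCLike.nonneg_iff.mp (conj_posSemidef hM).diag_nonneg).1
  have peierls {M : Matrix n n 𝕜} (hM : M.PosSemidef) : spectralSum f M ≤ ∑ i, f (d M i) := by
    rw [← spectralSum_star_mul_mul f M U]
    exact spectralSum_le_sum_diag hf _ (conj_posSemidef hM).eigenvalues_nonneg
  have hd (i : n) : a * d A i + b * d B i = hC.1.eigenvalues i := by
    have h := congrFun₂ hC.1.conjStarAlgAut_star_eigenvectorUnitary i i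
    rw [Unitary.conjStarAlgAut_star_apply] at h
    simpa [d, Matrix.mul_add, Matrix.add_mul, RCLike.smul_re] using congrArg RCLike.re h
  calc a * spectralSum f A + b * spectralSum f B
      ≤ a * ∑ i, f (d A i) + b * ∑ i, f (d B i) := by gcongr <;> exact peierls ‹_›
    _ = ∑ i, (a * f (d A i) + b * f (d B i)) := by
        rw [Finset.mul_sum, Finset.mul_sum, Finset.sum_add_distrib]
    _ ≤ ∑ i, f (a * d A i + b * d B i) :=
        Finset.sum_le_sum fun i _ => hf.2 (d_nonneg hA i) (d_nonneg hB i) ha hb hab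
    _ = spectralSum f (a • A + b • B) := by
        simp_rw [hd, spectralSum_eq_sum_eigenvalues f hC.1]

lemma exists_factorization_gram_eq_diagonal (hA : A.PosSemidef) :
    ∃ P : Matrix n n 𝕜, A = P * Pᴴ ∧ Pᴴ * P = diagonal fun i => (hA.1.eigenvalues i : 𝕜) := by
  set U := hA.1.eigenvectorUnitary
  set R : Matrix n n 𝕜 := diagonal fun i => (√(hA.1.eigenvalues i) : 𝕜)
  have hRR : R * R = diagonal fun i => (hA.1.eigenvalues i : 𝕜) := by
    simp_rw [R, diagonal_mul_diagonal, ← RCLike.ofReal_mul,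
      Real.mul_self_sqrt (hA.eigenvalues_nonneg _)]
  have hR : Rᴴ = R := by simp [R, diagonal_conjTranspose, Pi.star_def]
  refine ⟨U.1 * R, ?_, ?_⟩ <;> rw [conjTranspose_mul, hR]
  · rw [mul_assoc, ← mul_assoc R, hRR, ← mul_assoc]
    exact hA.1.spectral_theorem
  · rw [mul_assoc, ← mul_assoc _ U.1, ← star_eq_conjTranspose, Unitary.coe_star_mul_self, one_mul,
      hRR]

/-- **Rotfel'd's inequality**. With `A = P Pᴴ` and `B = Q Qᴴ`, the matrix `A + B = [P Q] [P Q]ᴴ` has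
the same nonzero eigenvalues as the Gram matrix `[P Q]ᴴ [P Q]`, to which Peierls' inequality
applies. -/
lemma spectralSum_add_le (hf : ConcaveOn ℝ (Set.Ici 0) f) (hf0 : f 0 = 0) (hA : A.PosSemidef)
    (hB : B.PosSemidef) : spectralSum f (A + B) ≤ spectralSum f A + spectralSum f B := by
  obtain ⟨P, hP, hP'⟩ := exists_factorization_gram_eq_diagonal hA
  obtain ⟨Q, hQ, hQ'⟩ := exists_factorization_gram_eq_diagonal hB
  have hsum : A + B = fromCols P Q * (fromCols P Q)ᴴ := by
    rw [conjTranspose_fromCols_eq_fromRows_conjTranspose, fromCols_mul_fromRows, ← hP, ← hQ]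
  have hgram : (fromCols P Q)ᴴ * fromCols P Q = fromBlocks (Pᴴ * P) (Pᴴ * Q) (Qᴴ * P) (Qᴴ * Q) := by
    rw [conjTranspose_fromCols_eq_fromRows_conjTranspose, fromRows_mul_fromCols]
  have hpos := posSemidef_conjTranspose_mul_self (fromCols P Q)
  calc spectralSum f (A + B)
      = spectralSum f ((fromCols P Q)ᴴ * fromCols P Q) := by rw [hsum, spectralSum_mul_comm hf0]
    _ ≤ ∑ i, f (RCLike.re (((fromCols P Q)ᴴ * fromCols P Q) i i)) :=
        spectralSum_le_sum_diag hf hpos.1 hpos.eigenvalues_nonneg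
    _ = spectralSum f A + spectralSum f B := by
        simp [hgram, hP', hQ', Fintype.sum_sum_type, spectralSum_eq_sum_eigenvalues f hA.1,
          spectralSum_eq_sum_eigenvalues f hB.1]

end SpectralSum

section AlmostConvex

variable {E : Type*} [AddCommGroup E] [Module ℝ E] {s : Set E} {f : E → ℝ} {C : ℝ}

/-- `f` is convex on `s` up to an error of `C` times the binary entropy of the weights: the property
that the Alicki–Fannes–Winter method requires besides concavity. Unlike `ConvexOn`, it does not
include convexity of `s`. -/
def AlmostConvexOn (C : ℝ) (s : Set E) (f : E → ℝ) : Prop :=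
  ∀ ⦃x⦄, x ∈ s → ∀ ⦃y⦄, y ∈ s → ∀ ⦃a b : ℝ⦄, 0 ≤ a → 0 ≤ b → a + b = 1 →
    f (a • x + b • y) ≤ a * f x + b * f y + C * Real.binEntropy a

/-- The Alicki–Fannes–Winter method: compare both values with the value of `f` at the common mixture
`(1 + ε)⁻¹ • (x + ε • u) = (1 + ε)⁻¹ • (y + ε • v)`. -/
lemma sub_le_of_concaveOn_of_almostConvexOn (hf : ConcaveOn ℝ s f)
    (hfC : AlmostConvexOn C s f) {M ε : ℝ}
    (hM : ∀ ⦃x⦄, x ∈ s → ∀ ⦃y⦄, y ∈ s → f x - f y ≤ M) (hε : 0 ≤ ε) {x y u v : E} (hx : x ∈ s)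
    (hy : y ∈ s) (hu : u ∈ s) (hv : v ∈ s) (h : x + ε • u = y + ε • v) :
    f x - f y ≤ ε * M + (1 + ε) * Real.binEntropy (ε / (1 + ε)) * C := by
  have hpos : 0 < 1 + ε := by positivity
  set a := ε / (1 + ε) with ha_def
  set b := 1 / (1 + ε) with hb_def
  have ha : 0 ≤ a := by positivity
  have hb : 0 ≤ b := by positivity
  have hab : a + b = 1 := by rw [ha_def, hb_def]; field_simp; ring
  have hmix (p q : E) : a • p + b • q = b • (q + ε • p) := by
    rw [smul_add, smul_smul, one_div_mul_eq_div, add_comm]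
  have hlower : a * f u + b * f x ≤ f (a • v + b • y) := by
    rw [hmix v y, ← h, ← hmix u x]
    exact hf.2 hu hx ha hb hab
  have hupper := hfC hv hy ha hb hab
  have hscale (r t : ℝ) : (1 + ε) * (a * r + b * t) = ε * r + t := by
    rw [ha_def, hb_def]; field_simp
  have hcompare : ε * f u + f x ≤ ε * f v + f y + (1 + ε) * (C * Real.binEntropy a) := by
    rw [← hscale, ← hscale, ← mul_add]
    exact mul_le_mul_of_nonneg_left (hlower.trans hupper) hpos.le
  linarith [mul_le_mul_of_nonneg_left (hM hv hu) hε]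

end AlmostConvex

section State

variable {n : Type*} [Fintype n] {A ρ : Matrix n n ℂ}

lemma convex_setOf_isState : Convex ℝ {ρ : Matrix n n ℂ | IsState ρ} := by
  refine fun ρ hρ σ hσ a b ha hb hab => ⟨convex_setOf_posSemidef hρ.1 hσ.1 ha hb hab, ?_⟩
  rw [trace_add, trace_smul, trace_smul, hρ.2, hσ.2, ← add_smul, hab, one_smul]

lemma IsState.nonempty (h : IsState ρ) : Nonempty n := by
  by_contra hn
  have := not_nonempty_iff.mp hn
  simpa [Matrix.trace] using h.2

lemma exists_isState [Nonempty n] : ∃ ρ : Matrix n n ℂ, IsState ρ := by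
  classical
  refine ⟨(Fintype.card n : ℝ)⁻¹ • 1, PosSemidef.one.smul (by positivity), ?_⟩
  rw [trace_smul, trace_one]
  simp

lemma exists_isState_smul_eq [Nonempty n] (hA : A.PosSemidef) {t : ℝ} (ht : A.trace = t) :
    ∃ τ : Matrix n n ℂ, IsState τ ∧ t • τ = A := by
  rcases eq_or_ne t 0 with rfl | ht0
  · obtain ⟨τ, hτ⟩ := exists_isState (n := n)
    exact ⟨τ, hτ, by rw [zero_smul, hA.trace_eq_zero_iff.mp (by simpa using ht)]⟩
  · have ht_nonneg : 0 ≤ t := by simpa [ht] using hA.trace_nonneg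
    refine ⟨t⁻¹ • A, ⟨hA.smul (inv_nonneg.mpr ht_nonneg), ?_⟩, smul_inv_smul₀ ht0 A⟩
    rw [trace_smul, ht, Complex.real_smul, ← Complex.ofReal_mul, inv_mul_cancel₀ ht0,
      Complex.ofReal_one]

end State

section Entropy

variable {n : Type*} [Fintype n] [DecidableEq n] {ρ : Matrix n n ℂ}

lemma IsState.sum_eigenvalues (hρ : IsState ρ) : ∑ i, hρ.1.1.eigenvalues i = 1 := by
  have h := hρ.2.symm.trans hρ.1.1.trace_eq_sum_eigenvalues
  exact Complex.ofReal_injective (by simpa using h.symm)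

lemma IsState.vnEnt_eq_spectralSum (hρ : IsState ρ) : vnEnt ρ = spectralSum Real.negMulLog ρ := by
  rw [vnEnt, dif_pos hρ.1.1, hρ.sum_eigenvalues, Real.negMulLog_one, sub_zero,
    spectralSum_eq_sum_eigenvalues]

lemma IsState.abs_vnEnt_le_card (hρ : IsState ρ) : |vnEnt ρ| ≤ Fintype.card n := by
  have h0 := hρ.1.eigenvalues_nonneg
  have h1 (i : n) : hρ.1.1.eigenvalues i ≤ 1 := by
    rw [← hρ.sum_eigenvalues]
    exact Finset.single_le_sum (fun j _ => h0 j) (Finset.mem_univ i)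
  rw [hρ.vnEnt_eq_spectralSum, spectralSum_eq_sum_eigenvalues _ hρ.1.1,
    abs_of_nonneg (Finset.sum_nonneg fun i _ => Real.negMulLog_nonneg (h0 i) (h1 i))]
  calc ∑ i, Real.negMulLog (hρ.1.1.eigenvalues i) ≤ ∑ _i : n, (1 : ℝ) :=
        Finset.sum_le_sum fun i _ => by
          linarith [Real.negMulLog_le_one_sub_self (h0 i), h0 i]
    _ = Fintype.card n := by simp

lemma concaveOn_vnEnt : ConcaveOn ℝ {ρ : Matrix n n ℂ | IsState ρ} vnEnt :=
  ((concaveOn_spectralSum Real.concaveOn_negMulLog).subset (fun _ hρ => hρ.1)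
    convex_setOf_isState).congr fun _ hρ => hρ.vnEnt_eq_spectralSum.symm

lemma IsState.spectralSum_negMulLog_smul (hρ : IsState ρ) (t : ℝ) :
    spectralSum Real.negMulLog (t • ρ) = t * vnEnt ρ + Real.negMulLog t := by
  rw [spectralSum_smul _ hρ.1.1, hρ.vnEnt_eq_spectralSum]
  simp_rw [spectralSum_eq_sum_eigenvalues _ hρ.1.1, Real.negMulLog_mul, Finset.sum_add_distrib,
    ← Finset.sum_mul, ← Finset.mul_sum, hρ.sum_eigenvalues]
  ring

lemma almostConvexOn_vnEnt : AlmostConvexOn 1 {ρ : Matrix n n ℂ | IsState ρ} vnEnt := by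
  intro ρ hρ σ hσ a b ha hb hab
  calc vnEnt (a • ρ + b • σ)
      = spectralSum Real.negMulLog (a • ρ + b • σ) :=
        (convex_setOf_isState hρ hσ ha hb hab).vnEnt_eq_spectralSum
    _ ≤ spectralSum Real.negMulLog (a • ρ) + spectralSum Real.negMulLog (b • σ) :=
        spectralSum_add_le Real.concaveOn_negMulLog Real.negMulLog_zero (hρ.1.smul ha)
          (hσ.1.smul hb)
    _ = a * vnEnt ρ + b * vnEnt σ + 1 * Real.binEntropy a := by
        rw [hρ.spectralSum_negMulLog_smul, hσ.spectralSum_negMulLog_smul,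
          Real.binEntropy_eq_negMulLog_add_negMulLog_one_sub, ← eq_sub_of_add_eq' hab]
        ring

end Entropy

section TraceNorm

open scoped MatrixOrder

variable {n : Type*} [Fintype n] [DecidableEq n] {A ρ₁ ρ₂ : Matrix n n ℂ}

lemma traceNorm_nonneg (M : Matrix n n ℂ) : 0 ≤ traceNorm M :=
  Finset.sum_nonneg fun _ _ => Real.sqrt_nonneg _

lemma traceNorm_eq_trace_abs (M : Matrix n n ℂ) : (traceNorm M : ℂ) = (CFC.abs M).trace := by
  have hM := (posSemidef_conjTranspose_mul_self M).1
  have habs : CFC.abs M = cfc Real.sqrt (Mᴴ * M) := by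
    rw [CFC.abs, CFC.sqrt_eq_real_sqrt _ (star_mul_self_nonneg M), cfcₙ_eq_cfc]
    rfl
  rw [trace_eq_spectralSum_id (nonneg_iff_posSemidef.mp (CFC.abs_nonneg M)).1, habs,
    spectralSum_cfc _ _ hM, Function.id_comp, spectralSum_eq_sum_eigenvalues _ hM]
  rfl

lemma trace_posPart_of_trace_eq_zero (hA : A.IsHermitian) (h0 : A.trace = 0) :
    A⁺.trace = (traceNorm A / 2 : ℝ) := by
  have h := congrArg trace (CFC.abs_add_self A hA)
  rw [trace_add, h0, add_zero, ← traceNorm_eq_trace_abs, trace_smul] at h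
  push_cast
  rw [h]
  simp

lemma trace_negPart_of_trace_eq_zero (hA : A.IsHermitian) (h0 : A.trace = 0) :
    A⁻.trace = (traceNorm A / 2 : ℝ) := by
  rw [← trace_posPart_of_trace_eq_zero hA h0, ← sub_eq_zero, ← neg_sub, ← trace_sub,
    CFC.posPart_sub_negPart A hA, h0, neg_zero]

lemma IsState.exists_add_smul_eq_add_smul (h₁ : IsState ρ₁) (h₂ : IsState ρ₂) :
    ∃ τ₁ τ₂ : Matrix n n ℂ, IsState τ₁ ∧ IsState τ₂ ∧
      ρ₁ + (traceNorm (ρ₁ - ρ₂) / 2) • τ₂ = ρ₂ + (traceNorm (ρ₁ - ρ₂) / 2) • τ₁ := by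
  have hD : (ρ₁ - ρ₂).IsHermitian := h₁.1.1.sub h₂.1.1
  have htrace : (ρ₁ - ρ₂).trace = 0 := by rw [trace_sub, h₁.2, h₂.2, sub_self]
  have := h₁.nonempty
  obtain ⟨τ₁, hτ₁, hpos⟩ := exists_isState_smul_eq
    (nonneg_iff_posSemidef.mp (CFC.posPart_nonneg (ρ₁ - ρ₂)))
    (trace_posPart_of_trace_eq_zero hD htrace)
  obtain ⟨τ₂, hτ₂, hneg⟩ := exists_isState_smul_eq
    (nonneg_iff_posSemidef.mp (CFC.negPart_nonneg (ρ₁ - ρ₂)))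
    (trace_negPart_of_trace_eq_zero hD htrace)
  refine ⟨τ₁, τ₂, hτ₁, hτ₂, ?_⟩
  rw [hpos, hneg, add_comm ρ₂, ← sub_eq_sub_iff_add_eq_add, CFC.posPart_sub_negPart _ hD]

lemma IsState.abs_sub_le_of_concaveOn_of_almostConvexOn {f : Matrix n n ℂ → ℝ} {C M : ℝ}
    (hf : ConcaveOn ℝ {ρ | IsState ρ} f) (hfC : AlmostConvexOn C {ρ | IsState ρ} f)
    (hM : ∀ ⦃ρ⦄, IsState ρ → ∀ ⦃τ⦄, IsState τ → |f ρ - f τ| ≤ M)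
    (h₁ : IsState ρ₁) (h₂ : IsState ρ₂) :
    |f ρ₁ - f ρ₂| ≤ traceNorm (ρ₁ - ρ₂) / 2 * M + (1 + traceNorm (ρ₁ - ρ₂) / 2) *
      Real.binEntropy (traceNorm (ρ₁ - ρ₂) / 2 / (1 + traceNorm (ρ₁ - ρ₂) / 2)) * C := by
  obtain ⟨τ₁, τ₂, hτ₁, hτ₂, hmix⟩ := h₁.exists_add_smul_eq_add_smul h₂
  have hε := div_nonneg (traceNorm_nonneg (ρ₁ - ρ₂)) zero_le_two
  have hM' : ∀ ⦃ρ⦄, IsState ρ → ∀ ⦃τ⦄, IsState τ → f ρ - f τ ≤ M :=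
    fun ρ hρ τ hτ => (le_abs_self _).trans (hM hρ hτ)
  refine abs_sub_le_iff.mpr ⟨?_, ?_⟩
  · exact sub_le_of_concaveOn_of_almostConvexOn hf hfC hM' hε h₁ h₂ hτ₂ hτ₁ hmix
  · exact sub_le_of_concaveOn_of_almostConvexOn hf hfC hM' hε h₂ h₁ hτ₁ hτ₂ hmix.symm

end TraceNorm

section Marginal

variable {N : ℕ} {α : Fin N → Type*} [∀ i, Fintype (α i)] (S : Finset (Fin N))

lemma marg_eq_sum_submatrix (ω : Matrix (∀ i, α i) (∀ i, α i) ℂ) :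
    marg S ω = ∑ g : ∀ i : {x : Fin N // x ∉ S}, α i.1,
      ω.submatrix (fun p => (Equiv.piEquivPiSubtypeProd (· ∈ S) α).symm (p, g))
        (fun p => (Equiv.piEquivPiSubtypeProd (· ∈ S) α).symm (p, g)) := by
  ext p q
  rw [Matrix.sum_apply]
  rfl

lemma marg_add (ρ σ : Matrix (∀ i, α i) (∀ i, α i) ℂ) :
    marg S (ρ + σ) = marg S ρ + marg S σ := by
  ext p q
  simp [marg, Finset.sum_add_distrib]

lemma marg_smul (t : ℝ) (ρ : Matrix (∀ i, α i) (∀ i, α i) ℂ) :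
    marg S (t • ρ) = t • marg S ρ := by
  ext p q
  simp [marg, Finset.mul_sum]

lemma trace_marg (ω : Matrix (∀ i, α i) (∀ i, α i) ℂ) : (marg S ω).trace = ω.trace := by
  rw [marg_eq_sum_submatrix, trace_sum]
  simp only [Matrix.trace, diag_apply, submatrix_apply]
  rw [Finset.sum_comm, ← Fintype.sum_prod_type']
  exact (Equiv.piEquivPiSubtypeProd (· ∈ S) α).symm.sum_comp fun x => ω x x

lemma IsState.marg {ω : Matrix (∀ i, α i) (∀ i, α i) ℂ} (hω : IsState ω) :
    IsState (marg S ω) := by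
  refine ⟨?_, (trace_marg S ω).trans hω.2⟩
  rw [marg_eq_sum_submatrix]
  exact posSemidef_sum _ fun g _ => hω.1.submatrix _

end Marginal

section EntropyCombination

variable {N : ℕ} {α : Fin N → Type*} [∀ i, Fintype (α i)] [∀ i, DecidableEq (α i)]
  {K : Type*} [Fintype K] (c : K → ℝ) (X : K → Finset (Fin N))

lemma almostConvexOn_entCombo :
    AlmostConvexOn (∑ k ∈ Finset.univ.filter (fun k => 0 < c k), c k)
      {ρ : Matrix (∀ i, α i) (∀ i, α i) ℂ | IsState ρ} (entCombo c X) := by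
  intro ρ hρ σ hσ a b ha hb hab
  simp only [Finset.sum_filter, entCombo, Finset.mul_sum, Finset.sum_mul, ← Finset.sum_add_distrib]
  refine Finset.sum_le_sum fun k _ => ?_
  rw [marg_add, marg_smul, marg_smul]
  have hρk := hρ.marg (X k)
  have hσk := hσ.marg (X k)
  split_ifs with hk
  · linarith [mul_le_mul_of_nonneg_left (almostConvexOn_vnEnt hρk hσk ha hb hab) hk.le]
  · have hconc := concaveOn_vnEnt.2 hρk hσk ha hb hab
    rw [smul_eq_mul, smul_eq_mul] at hconc
    linarith [mul_le_mul_of_nonpos_left hconc (not_lt.mp hk)]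

lemma IsState.abs_entCombo_le {ρ : Matrix (∀ i, α i) (∀ i, α i) ℂ} (hρ : IsState ρ) :
    |entCombo c X ρ| ≤ ∑ k, |c k| * Fintype.card (∀ i : {x : Fin N // x ∈ X k}, α i.1) :=
  (Finset.abs_sum_le_sum_abs _ _).trans <| Finset.sum_le_sum fun k _ => by
    rw [abs_mul]
    exact mul_le_mul_of_nonneg_left (hρ.marg (X k)).abs_vnEnt_le_card (abs_nonneg _)

lemma bddAbove_abs_entCombo_sub :
    BddAbove {x : ℝ | ∃ ρ τ : Matrix (∀ i, α i) (∀ i, α i) ℂ,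
      IsState ρ ∧ IsState τ ∧ x = |entCombo c X ρ - entCombo c X τ|} := by
  let B := ∑ k, |c k| * Fintype.card (∀ i : {x : Fin N // x ∈ X k}, α i.1)
  refine ⟨B + B, ?_⟩
  rintro x ⟨ρ, τ, hρ, hτ, rfl⟩
  exact (abs_sub _ _).trans (add_le_add (hρ.abs_entCombo_le c X) (hτ.abs_entCombo_le c X))

end EntropyCombination

/-- Continuity bound for a concave linear combination of marginal entropies:
`|F(ω¹) − F(ω²)| ≤ ε·sup|F(ω)−F(ω')| + (1+ε)h₂(ε/(1+ε))·Σ_{c_k>0} c_k`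
whenever `ε = ½‖ω¹−ω²‖₁ < 1`. -/
theorem entCombo_continuity_bound {N : ℕ} {α : Fin N → Type*}
    [∀ i, Fintype (α i)] [∀ i, DecidableEq (α i)]
    {K : Type*} [Fintype K] (c : K → ℝ) (X : K → Finset (Fin N))
    (hconc : ∀ ρ τ : Matrix (∀ i, α i) (∀ i, α i) ℂ, IsState ρ → IsState τ →
      ∀ t : ℝ, 0 ≤ t → t ≤ 1 →
        t * entCombo c X ρ + (1 - t) * entCombo c X τ
          ≤ entCombo c X (t • ρ + (1 - t) • τ))
    (ω₁ ω₂ : Matrix (∀ i, α i) (∀ i, α i) ℂ) (h1 : IsState ω₁) (h2 : IsState ω₂)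
    (hε : traceNorm (ω₁ - ω₂) / 2 < 1) :
    |entCombo c X ω₁ - entCombo c X ω₂|
      ≤ (traceNorm (ω₁ - ω₂) / 2) *
          sSup {x : ℝ | ∃ ρ τ : Matrix (∀ i, α i) (∀ i, α i) ℂ, IsState ρ ∧ IsState τ ∧ x = |entCombo c X ρ - entCombo c X τ|}
        + (1 + traceNorm (ω₁ - ω₂) / 2) *
            Real.binEntropy ((traceNorm (ω₁ - ω₂) / 2) / (1 + traceNorm (ω₁ - ω₂) / 2)) *
            ∑ k ∈ Finset.univ.filter (fun k => 0 < c k), c k := by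
  have hF : ConcaveOn ℝ {ρ | IsState ρ} (entCombo c X) :=
    ⟨convex_setOf_isState, fun ρ hρ τ hτ a b ha hb hab => by
      obtain rfl := eq_sub_of_add_eq' hab
      exact hconc ρ τ hρ hτ a ha (sub_nonneg.mp hb)⟩
  exact h1.abs_sub_le_of_concaveOn_of_almostConvexOn hF (almostConvexOn_entCombo c X)
    (fun ρ hρ τ hτ => le_csSup (bddAbove_abs_entCombo_sub c X) ⟨ρ, τ, hρ, hτ, rfl⟩) h2
end
end
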